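/- arXiv:2602.07214 — 2 statements merged into one kernel-verified Lean document; each statement's English description precedes it below -/
import Mathlib

section
/- Let N ≥ 1 and s ∈ (0,1) with N > 2s, let υ ∈ ℝ^N with υ ≠ 0, let ε > 0, and let ρ : ℝ → ℝ be smooth with compact support in (−2,2). For μ > 0 define W(μ; p, q) := μ|p−q|·(1 + |υ + μq|) + | |υ + μp|^{2s−N} − |υ + μq|^{2s−N} |. Then lim_{μ→0⁺} ∬_{B_{ε/μ}(0) × B_{2ε/μ}(0)} W(μ; p, q) · |ρ(|p|²) − ρ(|q|²)| / ( |q|^{N−2s} · |p−q|^{N+2s} ) dp dq = 0. -/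
/-!
The integral is `O(μ ^ s)`. Write `b = N - s` and `V(x) = 1 + |υ + μx|^{-b}`.

* Weight. For `0 < θ ≤ 1` one has `||u|^{-a} - |v|^{-a}| ≤ C |u - v|^θ (|u|^{-a-θ} + |v|^{-a-θ})`
  (`abs_rpow_neg_sub_le`). With `a = N - 2s` and `θ = s` the exponent `a + θ = b` stays below `N`,
  so the singularity remains integrable. As `μ|p - q| ≤ 3ε` on the domain, this gives
  `W ≤ C (μ|p - q|)^s (V(p) + V(q))` (`remainder_le`).
* Kernel. The remaining factor `(V(p) + V(q)) |ρ(|p|²) - ρ(|q|²)| |q|^{-(N-2s)} |p - q|^{-(N+s)}`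
  is dominated pointwise (`kernel_le_dominant`). The difference of cutoffs vanishes unless `p` or
  `q` lies in `B_2`. If both points lie in `B_4`, then `V` is bounded for small `μ` and the
  Lipschitz bound on the cutoff leaves the locally integrable `|p - q|^{1-N-s}`. Otherwise one
  point is in `B_2` and the other, `x`, outside `B_4`, so `|p - q| ≥ |x|/2` and the bound has
  product form with the factor `|x|^{-N-s} V(x)`.
* Tail. Up to a constant, `|x|^{-N-s} V(x)` is at most
  `(1+|x|)^{-N-s} + μ^{N+s} |υ + μx|^{-b} 1_{|υ + μx| < 1}`, because `υ + μx` can be small only if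
  `|x| ≥ |υ|/(2μ)`. Rescaling `y = υ + μx` bounds its integral uniformly in `μ ≤ 1`
  (`lintegral_tailKernel_le`). Hence the dominating function has integral bounded in `μ`
  (`lintegral_dominant_le`), and the prefactor `μ ^ s` finishes the proof.
-/

open MeasureTheory Filter
open scoped ENNReal Topology

noncomputable section

/-! ### Hölder estimate for negative powers -/

/-- The bound also covers `x = 0` or `y = 0`, where `0 ^ (-a) = 0` by convention. -/
lemma abs_rpow_neg_sub_le {a θ x y : ℝ} (ha : 0 < a) (hθ : 0 < θ) (hθ1 : θ ≤ 1)
    (hx : 0 ≤ x) (hy : 0 ≤ y) :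
    |x ^ (-a) - y ^ (-a)| ≤ (1 + a) * |x - y| ^ θ * (x ^ (-(a + θ)) + y ^ (-(a + θ))) := by
  wlog hxy : x ≤ y generalizing x y
  · rw [abs_sub_comm, abs_sub_comm x y, add_comm (x ^ _)]
    exact this hy hx (le_of_not_ge hxy)
  rcases hx.eq_or_lt with rfl | hx0
  · rcases hy.eq_or_lt with rfl | hy0
    · simp only [sub_self, abs_zero]; positivity
    · rw [Real.zero_rpow (by linarith), Real.zero_rpow (by linarith), zero_sub, zero_sub, abs_neg,
        abs_neg, abs_of_pos hy0, abs_of_pos (by positivity), zero_add, mul_assoc,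
        ← Real.rpow_add hy0, show θ + -(a + θ) = -a by ring]
      have : 0 < y ^ (-a) := by positivity
      nlinarith
  have hy0 : 0 < y := hx0.trans_le hxy
  set r := x / y with hr
  have hr0 : 0 < r := by positivity
  have hr1 : r ≤ 1 := div_le_one_of_le₀ hxy hy
  -- Bernoulli's inequality if `1 ≤ a`, and `r ≤ r ^ a` otherwise
  have hbern : 1 - r ^ a ≤ (1 + a) * (1 - r) := by
    rcases le_total 1 a with h1 | h1
    · have := one_add_mul_self_le_rpow_one_add (s := r - 1) (by linarith) h1
      rw [show 1 + (r - 1) = r by ring] at this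
      nlinarith
    · have : r ≤ r ^ a := by
        simpa using Real.rpow_le_rpow_of_exponent_ge hr0 hr1 h1
      nlinarith
  have hpow : 1 - r ≤ (1 - r) ^ θ := Real.self_le_rpow_of_le_one (by linarith) (by linarith) hθ1
  have hrr : 1 - r ≤ (y - x) / x := by
    rw [hr, show 1 - x / y = (y - x) / y by field_simp]
    exact div_le_div_of_nonneg_left (by linarith) hx0 hxy
  have hpow2 : (1 - r) ^ θ ≤ (y - x) ^ θ * x ^ (-θ) := by
    rw [Real.rpow_neg hx, ← div_eq_mul_inv, ← Real.div_rpow (by linarith) hx]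
    exact Real.rpow_le_rpow (by linarith) hrr hθ.le
  have hfac : y ^ (-a) = x ^ (-a) * r ^ a := by
    rw [hr, Real.div_rpow hx hy, Real.rpow_neg hx, Real.rpow_neg hy]
    field_simp
  have hle : y ^ (-a) ≤ x ^ (-a) := Real.rpow_le_rpow_of_nonpos hx0 hxy (by linarith)
  rw [abs_of_nonneg (by linarith), abs_sub_comm, abs_of_nonneg (sub_nonneg.2 hxy), hfac]
  calc x ^ (-a) - x ^ (-a) * r ^ a = x ^ (-a) * (1 - r ^ a) := by ring
    _ ≤ x ^ (-a) * ((1 + a) * ((y - x) ^ θ * x ^ (-θ))) := by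
      gcongr
      exact hbern.trans (by gcongr; exact hpow.trans hpow2)
    _ = (1 + a) * (y - x) ^ θ * x ^ (-(a + θ)) := by
      rw [show -(a + θ) = -a + -θ by ring, Real.rpow_add hx0]; ring
    _ ≤ _ := by
      have : 0 ≤ (y - x) ^ θ := Real.rpow_nonneg (by linarith) _
      gcongr
      exact le_add_of_nonneg_right (by positivity)

section Kernels

variable {N : ℕ}

/-! ### Comparison kernels and their integrals -/

/-- The power `|x|^{-c}` truncated to the open ball of radius `R`. -/
def cutKernel (c R : ℝ) (x : EuclideanSpace ℝ (Fin N)) : ℝ :=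
  if ‖x‖ < R then ‖x‖ ^ (-c) else 0

lemma cutKernel_nonneg (c R : ℝ) (x : EuclideanSpace ℝ (Fin N)) : 0 ≤ cutKernel c R x := by
  unfold cutKernel; split_ifs <;> positivity

lemma cutKernel_of_lt {c R : ℝ} {x : EuclideanSpace ℝ (Fin N)} (h : ‖x‖ < R) :
    cutKernel c R x = ‖x‖ ^ (-c) := if_pos h

lemma measurable_cutKernel (c R : ℝ) :
    Measurable (cutKernel c R : EuclideanSpace ℝ (Fin N) → ℝ) := by
  unfold cutKernel
  exact Measurable.ite (measurableSet_lt (by fun_prop) (by fun_prop)) (by fun_prop) (by fun_prop)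

lemma lintegral_cutKernel_lt_top (hN : 1 ≤ N) {c : ℝ} (hc : c < N) (R : ℝ) :
    ∫⁻ x : EuclideanSpace ℝ (Fin N), ENNReal.ofReal (cutKernel c R x) < ∞ := by
  have h : IntegrableOn (fun x : EuclideanSpace ℝ (Fin N) => ‖x‖ ^ (-c))
      (Metric.ball 0 R) := by
    refine integrableOn_ball_of_norm_le_rpow (C := 1) (α := c) (by simpa using hN)
      (by simpa using hc) (.of_forall fun x => ?_) ?_
    · rw [Real.norm_of_nonneg (by positivity), one_mul]
    · exact Measurable.aestronglyMeasurable (by fun_prop)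
  have h2 := ((integrable_indicator_iff measurableSet_ball).2 h).lintegral_lt_top
  refine lt_of_le_of_lt (lintegral_mono fun x => ?_) h2
  simp [cutKernel, Set.indicator]

/-- The majorant, up to a constant, of `|x|^{-(N+s)} (1 + |υ + μx|^{-(N-s)})` for `|x| ≥ 1`; see
`rpow_mul_singWeight_le`. -/
def tailKernel (N : ℕ) (s μ : ℝ) (υ x : EuclideanSpace ℝ (Fin N)) : ℝ :=
  (1 + ‖x‖) ^ (-(N + s)) + μ ^ (N + s) * cutKernel (N - s) 1 (υ + μ • x)

lemma tailKernel_nonneg {s μ : ℝ} (hμ : 0 < μ) (υ x : EuclideanSpace ℝ (Fin N)) :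
    0 ≤ tailKernel N s μ υ x := by
  have := cutKernel_nonneg (N - s) 1 (υ + μ • x)
  unfold tailKernel; positivity

lemma measurable_tailKernel (s μ : ℝ) (υ : EuclideanSpace ℝ (Fin N)) :
    Measurable (tailKernel N s μ υ) := by
  unfold tailKernel
  have := (measurable_cutKernel (N := N) (N - s) 1).comp
    (show Measurable fun x : EuclideanSpace ℝ (Fin N) => υ + μ • x by fun_prop)
  exact Measurable.add (by fun_prop) (this.const_mul _)

lemma lintegral_comp_add_smul {μ : ℝ} (hμ : 0 < μ) (υ : EuclideanSpace ℝ (Fin N))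
    {f : EuclideanSpace ℝ (Fin N) → ℝ≥0∞} (hf : Measurable f) :
    ∫⁻ x, f (υ + μ • x) = ENNReal.ofReal (μ ^ (-(N : ℝ))) * ∫⁻ x, f x := by
  have h1 : ∫⁻ x, f (υ + μ • x) = ∫⁻ y, f (υ + y) ∂(Measure.map (μ • ·) volume) := by
    rw [lintegral_map (by fun_prop) (by fun_prop)]
  rw [h1, Measure.map_addHaar_smul _ hμ.ne', lintegral_smul_measure, lintegral_add_left_eq_self,
    finrank_euclideanSpace_fin, abs_of_pos (by positivity), Real.rpow_neg hμ.le,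
    Real.rpow_natCast, smul_eq_mul]

/-- The rescaling `y = υ + μx` costs `μ^{-N}`, which the factor `μ^{N+s}` absorbs, so the bound does
not depend on `μ ≤ 1`. -/
lemma lintegral_tailKernel_le {s μ : ℝ} (hs : 0 < s) (hμ : 0 < μ) (hμ1 : μ ≤ 1)
    (υ : EuclideanSpace ℝ (Fin N)) :
    ∫⁻ x, ENNReal.ofReal (tailKernel N s μ υ x) ≤
      (∫⁻ x : EuclideanSpace ℝ (Fin N), ENNReal.ofReal ((1 + ‖x‖) ^ (-(N + s)))) +
        ∫⁻ x : EuclideanSpace ℝ (Fin N), ENNReal.ofReal (cutKernel (N - s) 1 x) := by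
  have hmeas := (measurable_cutKernel (N := N) (N - s) 1).ennreal_ofReal
  have hcomp : Measurable fun x : EuclideanSpace ℝ (Fin N) =>
      ENNReal.ofReal (cutKernel (N - s) 1 (υ + μ • x)) := hmeas.comp (by fun_prop)
  have : ∀ x : EuclideanSpace ℝ (Fin N), ENNReal.ofReal (tailKernel N s μ υ x) =
      ENNReal.ofReal ((1 + ‖x‖) ^ (-(N + s))) +
      ENNReal.ofReal (μ ^ (N + s)) * ENNReal.ofReal (cutKernel (N - s) 1 (υ + μ • x)) := by
    intro x
    unfold tailKernel
    rw [ENNReal.ofReal_add (by positivity)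
      (mul_nonneg (by positivity) (cutKernel_nonneg _ _ _)), ENNReal.ofReal_mul (by positivity)]
  simp_rw [this]
  rw [lintegral_add_left (by fun_prop), lintegral_const_mul _ hcomp,
    lintegral_comp_add_smul hμ υ hmeas, ← mul_assoc, ← ENNReal.ofReal_mul (by positivity),
    ← Real.rpow_add hμ, show (N : ℝ) + s + -N = s by ring]
  gcongr
  refine mul_le_of_le_one_left zero_le ?_
  exact ENNReal.ofReal_le_one.2 (Real.rpow_le_one hμ.le hμ1 hs.le)

/-! ### Pointwise estimates -/

/-- The radial function `x ↦ ρ(|x|²)` is bounded, Lipschitz, and supported in the ball of radius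
`2` (indeed `√2`). -/
lemma exists_cutoff_bound {ρ : ℝ → ℝ} (hρ : ContDiff ℝ (⊤ : ℕ∞) ρ)
    (hρsupp : tsupport ρ ⊆ Set.Ioo (-2 : ℝ) 2) :
    ∃ L : ℝ, 0 ≤ L ∧ (∀ p q : EuclideanSpace ℝ (Fin N),
      |ρ (‖p‖ ^ 2) - ρ (‖q‖ ^ 2)| ≤ L ∧ |ρ (‖p‖ ^ 2) - ρ (‖q‖ ^ 2)| ≤ L * ‖p - q‖ ∧
      (2 ≤ ‖p‖ → 2 ≤ ‖q‖ → |ρ (‖p‖ ^ 2) - ρ (‖q‖ ^ 2)| = 0)) := by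
  have hz : ∀ p : EuclideanSpace ℝ (Fin N), 2 ≤ ‖p‖ → ρ (‖p‖ ^ 2) = 0 := by
    intro p hp
    by_contra h
    have := (hρsupp (subset_tsupport _ h)).2
    nlinarith
  have hc : HasCompactSupport fun p : EuclideanSpace ℝ (Fin N) => ρ (‖p‖ ^ 2) := by
    refine HasCompactSupport.intro (isCompact_closedBall (0 : EuclideanSpace ℝ (Fin N)) 2) ?_
    intro x hx
    exact hz x (by simpa using (not_le.1 (by simpa using hx)).le)
  have hsm : ContDiff ℝ (⊤ : ℕ∞) fun p : EuclideanSpace ℝ (Fin N) => ρ (‖p‖ ^ 2) :=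
    hρ.comp (contDiff_norm_sq ℝ)
  obtain ⟨C, hC⟩ := hsm.lipschitzWith_of_hasCompactSupport hc (by simp)
  obtain ⟨M, hM⟩ := hc.exists_bound_of_continuous hsm.continuous
  have hM0 : 0 ≤ M := (norm_nonneg _).trans (hM 0)
  refine ⟨2 * M + C, by positivity, fun p q => ⟨?_, ?_, fun hp hq => by simp [hz p hp, hz q hq]⟩⟩
  · have h1 := hM p
    have h2 := hM q
    have h3 := norm_sub_le (ρ (‖p‖ ^ 2)) (ρ (‖q‖ ^ 2))
    have h4 : (0 : ℝ) ≤ C := C.2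
    simp only [Real.norm_eq_abs] at h1 h2 h3
    linarith
  · have h1 := hC.dist_le_mul p q
    rw [dist_eq_norm, dist_eq_norm, Real.norm_eq_abs] at h1
    nlinarith [norm_nonneg (p - q)]

/-- The weight `V(x) = 1 + |υ + μx|^{-(N-s)}`. -/
def singWeight (N : ℕ) (s μ : ℝ) (υ x : EuclideanSpace ℝ (Fin N)) : ℝ :=
  1 + ‖υ + μ • x‖ ^ (-(N - s))

lemma one_le_singWeight (s μ : ℝ) (υ x : EuclideanSpace ℝ (Fin N)) :
    1 ≤ singWeight N s μ υ x := le_add_of_nonneg_right (by positivity)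

lemma singWeight_le {s μ : ℝ} (hsN : s < N) (hμ : 0 < μ) {υ x : EuclideanSpace ℝ (Fin N)}
    (hυ : υ ≠ 0) (hx : μ * ‖x‖ ≤ ‖υ‖ / 2) :
    singWeight N s μ υ x ≤ 1 + (‖υ‖ / 2) ^ (-(N - s)) := by
  have h0 : 0 < ‖υ‖ := norm_pos_iff.2 hυ
  have h : ‖υ‖ / 2 ≤ ‖υ + μ • x‖ := by
    have := norm_sub_le (υ + μ • x) (μ • x)
    rw [add_sub_cancel_right, norm_smul, Real.norm_of_nonneg hμ.le] at this
    linarith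
  unfold singWeight
  gcongr 1 + ?_
  exact Real.rpow_le_rpow_of_nonpos (by positivity) h (by linarith)

/-- Where `V(x)` exceeds a fixed constant, `υ + μx` is small, which forces `|x| ≥ |υ|/(2μ)`; there
`|x|^{-(N+s)}` is bounded by a multiple of `μ^{N+s}`. -/
lemma rpow_mul_singWeight_le {s μ : ℝ} (hs : 0 < s) (hsN : s < N) (hμ : 0 < μ)
    {υ x : EuclideanSpace ℝ (Fin N)} (hυ : υ ≠ 0) (hx : 1 ≤ ‖x‖) :
    ‖x‖ ^ (-(N + s)) * singWeight N s μ υ x ≤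
      (2 ^ (N + s) * (2 + (‖υ‖ / 2) ^ (-(N - s))) + (‖υ‖ / 2) ^ (-(N + s))) *
        tailKernel N s μ υ x := by
  have h0 : 0 < ‖υ‖ := norm_pos_iff.2 hυ
  have hx0 : 0 < ‖x‖ := by linarith
  have hk := cutKernel_nonneg (N - s) 1 (υ + μ • x)
  have hT : ‖x‖ ^ (-(N + s)) ≤ 2 ^ (N + s) * (1 + ‖x‖) ^ (-(N + s)) := by
    rw [Real.rpow_neg (by positivity), Real.rpow_neg (by positivity), ← div_eq_mul_inv,
      ← Real.div_rpow (by positivity) (by positivity), ← Real.inv_rpow (by positivity)]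
    refine Real.rpow_le_rpow (by positivity) ?_ (by positivity)
    rw [inv_eq_one_div, div_le_div_iff₀ (by positivity) (by positivity)]
    linarith
  set A : ℝ := 2 ^ (N + s)
  set B : ℝ := (‖υ‖ / 2) ^ (-(N - s))
  set D : ℝ := (‖υ‖ / 2) ^ (-(N + s))
  set T : ℝ := (1 + ‖x‖) ^ (-(N + s))
  set M : ℝ := μ ^ (N + s)
  have hA : 0 ≤ A := by positivity
  have hB : 0 ≤ B := by positivity
  have hD : 0 ≤ D := by positivity
  have hT0 : 0 ≤ T := by positivity
  have hM0 : 0 ≤ M := by positivity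
  have hexp : (A * (2 + B) + D) * tailKernel N s μ υ x =
      A * T * (2 + B) + D * M * cutKernel (N - s) 1 (υ + μ • x) +
        (D * T + A * (2 + B) * M * cutKernel (N - s) 1 (υ + μ • x)) := by
    unfold tailKernel; ring
  have hrest : 0 ≤ D * T + A * (2 + B) * M * cutKernel (N - s) 1 (υ + μ • x) := by positivity
  have hkey : ‖x‖ ^ (-(N + s)) * singWeight N s μ υ x ≤
      A * T * (2 + B) + D * M * cutKernel (N - s) 1 (υ + μ • x) := by
    by_cases hW : singWeight N s μ υ x ≤ 2 + B
    · have : ‖x‖ ^ (-(N + s)) * singWeight N s μ υ x ≤ A * T * (2 + B) := by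
        have := one_le_singWeight s μ υ x
        gcongr
      have : 0 ≤ D * M * cutKernel (N - s) 1 (υ + μ • x) := by positivity
      linarith
    · have h1 : ‖υ‖ / 2 < μ * ‖x‖ := by
        by_contra! h
        exact hW ((singWeight_le hsN hμ hυ h).trans (by linarith))
      have h2 : ‖υ + μ • x‖ < 1 := by
        by_contra! h
        apply hW
        have := Real.rpow_le_one_of_one_le_of_nonpos h (show -((N : ℝ) - s) ≤ 0 by linarith)
        unfold singWeight
        linarith
      rw [cutKernel_of_lt h2]
      have h3 : ‖x‖ ^ (-(N + s)) ≤ D * M := by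
        have : (μ * ‖x‖) ^ (-(N + s)) ≤ D :=
          Real.rpow_le_rpow_of_nonpos (by positivity) h1.le (by linarith)
        calc ‖x‖ ^ (-(N + s)) = (μ * ‖x‖) ^ (-(N + s)) * M := by
              rw [Real.mul_rpow hμ.le (norm_nonneg _), mul_right_comm, ← Real.rpow_add hμ]
              simp
          _ ≤ D * M := by gcongr
      unfold singWeight
      have h4 : 0 ≤ ‖υ + μ • x‖ ^ (-(N - s)) := by positivity
      have : A * T ≤ A * T * (2 + B) := le_mul_of_one_le_right (by positivity) (by linarith)
      have := mul_le_mul_of_nonneg_right h3 h4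
      linarith
  linarith

/-- The weight `W(μ;p,q)` is bounded by a multiple of `(μ|p-q|)^s (V(p) + V(q))`. -/
lemma remainder_le {s μ ε : ℝ} (hs : s ∈ Set.Ioo (0 : ℝ) 1) (hNs : 2 * s < N) (hμ : 0 < μ)
    (hε : 0 < ε) {υ p q : EuclideanSpace ℝ (Fin N)} (hp : μ * ‖p‖ ≤ ε) (hq : μ * ‖q‖ ≤ 2 * ε) :
    μ * ‖p - q‖ * (1 + ‖υ + μ • q‖) +
        |‖υ + μ • p‖ ^ (2 * s - (N : ℝ)) - ‖υ + μ • q‖ ^ (2 * s - (N : ℝ))| ≤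
      ((3 * ε) ^ (1 - s) * (1 + ‖υ‖ + 2 * ε) + (1 + N)) * (μ ^ s * ‖p - q‖ ^ s) *
        (singWeight N s μ υ p + singWeight N s μ υ q) := by
  obtain ⟨hs0, hs1⟩ := hs
  set d := ‖p - q‖ with hd
  have hd0 : 0 ≤ d := norm_nonneg _
  have hmd : μ * d ≤ 3 * ε := by
    have : d ≤ ‖p‖ + ‖q‖ := norm_sub_le p q
    nlinarith
  have hX : μ ^ s * d ^ s = (μ * d) ^ s := (Real.mul_rpow hμ.le hd0).symm
  have hX0 : 0 ≤ μ ^ s * d ^ s := by positivity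
  have hVp := one_le_singWeight s μ υ p
  have hVq := one_le_singWeight s μ υ q
  have h1 : μ * d * (1 + ‖υ + μ • q‖) ≤
      (3 * ε) ^ (1 - s) * (1 + ‖υ‖ + 2 * ε) * (μ ^ s * d ^ s) := by
    have e1 : μ * d ≤ (3 * ε) ^ (1 - s) * (μ ^ s * d ^ s) := by
      calc μ * d = (μ * d) ^ (1 - s) * (μ * d) ^ s := by
            rw [← Real.rpow_add' (by positivity) (by simp)]; simp
        _ ≤ (3 * ε) ^ (1 - s) * (μ ^ s * d ^ s) := by
            rw [hX]
            gcongr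
    have e2 : 1 + ‖υ + μ • q‖ ≤ 1 + ‖υ‖ + 2 * ε := by
      have := norm_add_le υ (μ • q)
      rw [norm_smul, Real.norm_of_nonneg hμ.le] at this
      linarith
    calc _ ≤ (3 * ε) ^ (1 - s) * (μ ^ s * d ^ s) * (1 + ‖υ‖ + 2 * ε) := by gcongr
      _ = _ := by ring
  have h2 : |‖υ + μ • p‖ ^ (2 * s - (N : ℝ)) - ‖υ + μ • q‖ ^ (2 * s - (N : ℝ))| ≤
      (1 + N) * (μ ^ s * d ^ s) * (singWeight N s μ υ p + singWeight N s μ υ q) := by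
    have key := abs_rpow_neg_sub_le (a := N - 2 * s) (θ := s) (by linarith) hs0 hs1.le
      (norm_nonneg (υ + μ • p)) (norm_nonneg (υ + μ • q))
    have e1 : |‖υ + μ • p‖ - ‖υ + μ • q‖| ≤ μ * d := by
      refine (abs_norm_sub_norm_le _ _).trans_eq ?_
      rw [add_sub_add_left_eq_sub, ← smul_sub, norm_smul, Real.norm_of_nonneg hμ.le]
    rw [show -((N : ℝ) - 2 * s) = 2 * s - N by ring,
      show -((N : ℝ) - 2 * s + s) = -(N - s) by ring] at key
    refine key.trans ?_
    rw [hX]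
    gcongr
    · linarith
    · unfold singWeight; linarith
    · unfold singWeight; linarith
  calc _ ≤ (3 * ε) ^ (1 - s) * (1 + ‖υ‖ + 2 * ε) * (μ ^ s * d ^ s) *
        (singWeight N s μ υ p + singWeight N s μ υ q) +
        (1 + N) * (μ ^ s * d ^ s) * (singWeight N s μ υ p + singWeight N s μ υ q) := by
        refine add_le_add (h1.trans ?_) h2
        exact le_mul_of_one_le_right (by positivity) (by linarith)
    _ = _ := by ring

/-- The dominating function: a convolution term for nearby `p`, `q`, and two product terms for the
case where one of the points is far from the origin. -/
def dominant (N : ℕ) (s μ : ℝ) (υ p q : EuclideanSpace ℝ (Fin N)) : ℝ :=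
  cutKernel (N - 2 * s) 4 q * cutKernel (N + s - 1) 8 (p - q) +
    (cutKernel 0 4 p * tailKernel N s μ υ q +
      tailKernel N s μ υ p * cutKernel (N - 2 * s) 4 q)

lemma rpow_neg_le_of_half_le {x d c : ℝ} (hc : 0 ≤ c) (hx : 0 < x) (h : x / 2 ≤ d) :
    d ^ (-c) ≤ 2 ^ c * x ^ (-c) := by
  calc d ^ (-c) ≤ (x / 2) ^ (-c) := Real.rpow_le_rpow_of_nonpos (by positivity) h (by linarith)
    _ = _ := by
      rw [Real.div_rpow hx.le (by norm_num), Real.rpow_neg (by norm_num : (0 : ℝ) ≤ 2)]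
      field_simp

/-- Here `w` stands for `|ρ(|p|²) - ρ(|q|²)|`. The condition `4μ ≤ |υ|/2` keeps `V` bounded on the
ball of radius `4`. -/
lemma kernel_le_dominant {s μ L w : ℝ} (hs : 0 < s) (hNs : 2 * s < N)
    (hμ : 0 < μ) {υ p q : EuclideanSpace ℝ (Fin N)} (hυ : υ ≠ 0) (hμυ : μ * 4 ≤ ‖υ‖ / 2)
    (hpq : p ≠ q) (hw0 : 0 ≤ w) (hwL : w ≤ L) (hwd : w ≤ L * ‖p - q‖)
    (hw : 2 ≤ ‖p‖ → 2 ≤ ‖q‖ → w = 0) :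
    (singWeight N s μ υ p + singWeight N s μ υ q) * w * ‖q‖ ^ (-(N - 2 * s)) *
        ‖p - q‖ ^ (-(N + s)) ≤
      L * (2 + (‖υ‖ / 2) ^ (-(N - s))) *
        (2 + 2 ^ (N + s) * (2 ^ (N + s) * (2 + (‖υ‖ / 2) ^ (-(N - s))) +
          (‖υ‖ / 2) ^ (-(N + s)))) * dominant N s μ υ p q := by
  have hsN : s < N := by linarith
  have hsmall : ∀ x : EuclideanSpace ℝ (Fin N), ‖x‖ < 4 →
      singWeight N s μ υ x ≤ 1 + (‖υ‖ / 2) ^ (-(N - s)) := fun x hx =>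
    singWeight_le hsN hμ hυ (by nlinarith)
  have htail : ∀ x : EuclideanSpace ℝ (Fin N), 4 ≤ ‖x‖ → _ := fun x hx =>
    rpow_mul_singWeight_le hs hsN hμ hυ (x := x) (by linarith)
  have hd : 0 < ‖p - q‖ := norm_pos_iff.2 (sub_ne_zero.2 hpq)
  have hVp := one_le_singWeight s μ υ p
  have hVq := one_le_singWeight s μ υ q
  have hTp := tailKernel_nonneg (s := s) hμ υ p
  have hTq := tailKernel_nonneg (s := s) hμ υ q
  have hK1 := cutKernel_nonneg (N - 2 * s) 4 q
  have hK2 := cutKernel_nonneg (N + s - 1) 8 (p - q)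
  have hK3 := cutKernel_nonneg 0 4 p
  have hL : 0 ≤ L := hw0.trans hwL
  set B : ℝ := (‖υ‖ / 2) ^ (-(N - s))
  set A : ℝ := 2 ^ (N + s)
  set C : ℝ := A * (2 + B) + (‖υ‖ / 2) ^ (-(N + s))
  have hA : 0 ≤ A := by positivity
  have hB : 0 ≤ B := by positivity
  have hC : 0 ≤ C := by positivity
  -- the far point carries the larger weight, since `V` is bounded near the origin and `V ≥ 1`
  have hsum : ∀ x y : ℝ, 1 ≤ y → x ≤ 1 + B → x + y ≤ (2 + B) * y := fun x y hy hx => by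
    nlinarith
  have hexp : L * (2 + B) * (2 + A * C) * dominant N s μ υ p q =
      L * (2 + B) * (2 + A * C) *
        (cutKernel (N - 2 * s) 4 q * cutKernel (N + s - 1) 8 (p - q)) +
      L * (2 + B) * (2 + A * C) * (cutKernel 0 4 p * tailKernel N s μ υ q) +
      L * (2 + B) * (2 + A * C) * (tailKernel N s μ υ p * cutKernel (N - 2 * s) 4 q) := by
    unfold dominant; ring
  have hn1 : 0 ≤ L * (2 + B) * (2 + A * C) *
        (cutKernel (N - 2 * s) 4 q * cutKernel (N + s - 1) 8 (p - q)) := by positivity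
  have hn2 : 0 ≤ L * (2 + B) * (2 + A * C) * (cutKernel 0 4 p * tailKernel N s μ υ q) := by
    positivity
  have hn3 : 0 ≤ L * (2 + B) * (2 + A * C) *
      (tailKernel N s μ υ p * cutKernel (N - 2 * s) 4 q) := by positivity
  have hAC : 0 ≤ A * C := by positivity
  rw [hexp]
  rcases lt_or_ge ‖p‖ 4 with hp | hp <;> rcases lt_or_ge ‖q‖ 4 with hq | hq
  · refine le_trans ?_ (show _ ≤ _ by
      exact (le_add_of_nonneg_right hn2).trans (le_add_of_nonneg_right hn3))
    rw [cutKernel_of_lt hq, cutKernel_of_lt (by linarith [norm_sub_le p q])]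
    have hdd : ‖p - q‖ ^ (-((N : ℝ) + s - 1)) = ‖p - q‖ * ‖p - q‖ ^ (-(N + s)) := by
      rw [show -((N : ℝ) + s - 1) = 1 + -(N + s) by ring, Real.rpow_add hd, Real.rpow_one]
    rw [hdd]
    have hV : singWeight N s μ υ p + singWeight N s μ υ q ≤ (2 + B) * 2 := by
      linarith [hsmall p hp, hsmall q hq]
    calc _ ≤ ((2 + B) * (2 + A * C)) * (L * ‖p - q‖) * ‖q‖ ^ (-(N - 2 * s)) *
          ‖p - q‖ ^ (-(N + s)) := by
          gcongr
          refine hV.trans ?_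
          gcongr
          linarith
      _ = _ := by ring
  · rcases lt_or_ge ‖p‖ 2 with hp2 | hp2
    swap
    · rw [hw hp2 (by linarith)]; simp only [mul_zero, zero_mul]; positivity
    have hq1 : ‖q‖ ^ (-((N : ℝ) - 2 * s)) ≤ 1 :=
      Real.rpow_le_one_of_one_le_of_nonpos (by linarith) (by linarith)
    have hdq : ‖p - q‖ ^ (-((N : ℝ) + s)) ≤ A * ‖q‖ ^ (-(N + s)) := by
      refine rpow_neg_le_of_half_le (by positivity) (by linarith) ?_
      have := norm_sub_norm_le q p
      rw [norm_sub_rev] at this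
      linarith
    rw [cutKernel_of_lt hp, neg_zero, Real.rpow_zero]
    have hV := hsum _ _ hVq (hsmall p hp)
    have : (singWeight N s μ υ p + singWeight N s μ υ q) * w * ‖q‖ ^ (-(N - 2 * s)) *
        ‖p - q‖ ^ (-(N + s)) ≤ L * (2 + B) * (2 + A * C) * (1 * tailKernel N s μ υ q) :=
      calc _ ≤ (2 + B) * singWeight N s μ υ q * L * 1 * (A * ‖q‖ ^ (-(N + s))) := by gcongr
        _ = L * (2 + B) * A * (‖q‖ ^ (-(N + s)) * singWeight N s μ υ q) := by ring
        _ ≤ L * (2 + B) * A * (C * tailKernel N s μ υ q) := 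
            mul_le_mul_of_nonneg_left (htail q hq) (by positivity)
        _ = L * (2 + B) * (A * C) * (1 * tailKernel N s μ υ q) := by ring
        _ ≤ _ := by gcongr; linarith
    linarith
  · rcases lt_or_ge ‖q‖ 2 with hq2 | hq2
    swap
    · rw [hw (by linarith) hq2]; simp only [mul_zero, zero_mul]; positivity
    have hdp : ‖p - q‖ ^ (-((N : ℝ) + s)) ≤ A * ‖p‖ ^ (-(N + s)) := by
      refine rpow_neg_le_of_half_le (by positivity) (by linarith) ?_
      have := norm_sub_norm_le p q
      linarith
    have hV := hsum _ _ hVp (hsmall q hq)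
    rw [add_comm] at hV
    have : (singWeight N s μ υ p + singWeight N s μ υ q) * w * ‖q‖ ^ (-(N - 2 * s)) *
        ‖p - q‖ ^ (-(N + s)) ≤
        L * (2 + B) * (2 + A * C) * (tailKernel N s μ υ p * cutKernel (N - 2 * s) 4 q) := by
      rw [cutKernel_of_lt hq]
      calc _ ≤ (2 + B) * singWeight N s μ υ p * L * ‖q‖ ^ (-(N - 2 * s)) *
            (A * ‖p‖ ^ (-(N + s))) := by gcongr
        _ = L * (2 + B) * A * ‖q‖ ^ (-(N - 2 * s)) *
            (‖p‖ ^ (-(N + s)) * singWeight N s μ υ p) := by ring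
        _ ≤ L * (2 + B) * A * ‖q‖ ^ (-(N - 2 * s)) * (C * tailKernel N s μ υ p) := 
            mul_le_mul_of_nonneg_left (htail p hp) (by positivity)
        _ = L * (2 + B) * (A * C) * (tailKernel N s μ υ p * ‖q‖ ^ (-(N - 2 * s))) := by ring
        _ ≤ _ := by gcongr; linarith
    linarith
  · rw [hw (by linarith) (by linarith)]; simp only [mul_zero, zero_mul]; positivity

/-! ### Uniform integral bound and conclusion -/

lemma lintegral_dominant_le (hN : 1 ≤ N) {s : ℝ} (hs : s ∈ Set.Ioo (0 : ℝ) 1)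
    (υ : EuclideanSpace ℝ (Fin N)) :
    ∃ I : ℝ≥0∞, I ≠ ∞ ∧ ∀ μ : ℝ, 0 < μ → μ ≤ 1 →
      ∫⁻ z : EuclideanSpace ℝ (Fin N) × EuclideanSpace ℝ (Fin N),
        ENNReal.ofReal (dominant N s μ υ z.1 z.2) ≤ I := by
  obtain ⟨hs0, hs1⟩ := hs
  let κ (c R : ℝ) : ℝ≥0∞ := ∫⁻ x : EuclideanSpace ℝ (Fin N), ENNReal.ofReal (cutKernel c R x)
  have hκ : ∀ {c : ℝ} (R : ℝ), c < N → κ c R ≠ ∞ := fun R hc =>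
    (lintegral_cutKernel_lt_top hN hc R).ne
  let τ : ℝ≥0∞ := (∫⁻ x : EuclideanSpace ℝ (Fin N), ENNReal.ofReal ((1 + ‖x‖) ^ (-(N + s)))) +
    κ (N - s) 1
  have hτ : τ ≠ ∞ := by
    refine ENNReal.add_ne_top.2 ⟨(finite_integral_one_add_norm ?_).ne, hκ _ (by linarith)⟩
    rw [finrank_euclideanSpace_fin]
    linarith
  have hN0 : (0 : ℝ) < N := by exact_mod_cast hN
  refine ⟨κ (N - 2 * s) 4 * κ (N + s - 1) 8 + (κ 0 4 * τ + τ * κ (N - 2 * s) 4), ?_, ?_⟩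
  · have h1 := hκ (c := N - 2 * s) 4 (by linarith)
    have h2 := hκ (c := N + s - 1) 8 (by linarith)
    have h3 := hκ (c := 0) 4 hN0
    finiteness
  intro μ hμ hμ1
  have hm (c R : ℝ) := (measurable_cutKernel (N := N) c R).ennreal_ofReal
  have ht := (measurable_tailKernel s μ υ).ennreal_ofReal
  have htle : ∫⁻ x, ENNReal.ofReal (tailKernel N s μ υ x) ≤ τ :=
    lintegral_tailKernel_le hs0 hμ hμ1 υ
  have hsplit : ∀ z : EuclideanSpace ℝ (Fin N) × EuclideanSpace ℝ (Fin N),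
      ENNReal.ofReal (dominant N s μ υ z.1 z.2) =
        ENNReal.ofReal (cutKernel (N - 2 * s) 4 z.2) *
          ENNReal.ofReal (cutKernel (N + s - 1) 8 (z.1 - z.2)) +
        (ENNReal.ofReal (cutKernel 0 4 z.1) * ENNReal.ofReal (tailKernel N s μ υ z.2) +
          ENNReal.ofReal (tailKernel N s μ υ z.1) *
            ENNReal.ofReal (cutKernel (N - 2 * s) 4 z.2)) := by
    intro z
    have hTp := tailKernel_nonneg (s := s) hμ υ z.1
    have hTq := tailKernel_nonneg (s := s) hμ υ z.2
    have hK1 := cutKernel_nonneg (N - 2 * s) 4 z.2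
    have hK2 := cutKernel_nonneg (N + s - 1) 8 (z.1 - z.2)
    have hK3 := cutKernel_nonneg 0 4 z.1
    unfold dominant
    rw [ENNReal.ofReal_add (by positivity) (by positivity),
      ENNReal.ofReal_add (by positivity) (by positivity), ENNReal.ofReal_mul hK1,
      ENNReal.ofReal_mul hK3, ENNReal.ofReal_mul hTp]
  have hm1 : Measurable fun z : EuclideanSpace ℝ (Fin N) × EuclideanSpace ℝ (Fin N) =>
      ENNReal.ofReal (cutKernel (N - 2 * s) 4 z.2) *
          ENNReal.ofReal (cutKernel (N + s - 1) 8 (z.1 - z.2)) :=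
    ((hm _ _).comp measurable_snd).mul ((hm _ _).comp (measurable_fst.sub measurable_snd))
  have hm2 : Measurable fun z : EuclideanSpace ℝ (Fin N) × EuclideanSpace ℝ (Fin N) =>
      ENNReal.ofReal (cutKernel 0 4 z.1) * ENNReal.ofReal (tailKernel N s μ υ z.2) :=
    ((hm _ _).comp measurable_fst).mul (ht.comp measurable_snd)
  simp_rw [hsplit]
  rw [lintegral_add_left hm1, lintegral_add_left hm2, Measure.volume_eq_prod,
    lintegral_prod_mul (hm 0 4).aemeasurable ht.aemeasurable,
    lintegral_prod_mul ht.aemeasurable (hm (N - 2 * s) 4).aemeasurable,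
    lintegral_prod_symm' _ hm1]
  have hconv : ∀ q : EuclideanSpace ℝ (Fin N), ∫⁻ p : EuclideanSpace ℝ (Fin N),
      ENNReal.ofReal (cutKernel (N - 2 * s) 4 q) *
        ENNReal.ofReal (cutKernel (N + s - 1) 8 (p - q)) =
      ENNReal.ofReal (cutKernel (N - 2 * s) 4 q) * κ (N + s - 1) 8 := by
    intro q
    rw [lintegral_const_mul' _ _ ENNReal.ofReal_ne_top,
      lintegral_sub_right_eq_self (fun x => ENNReal.ofReal (cutKernel (N + s - 1) 8 x)) q]
  simp_rw [hconv]
  rw [lintegral_mul_const _ (hm _ _)]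
  change κ (N - 2 * s) 4 * κ (N + s - 1) 8 + (κ 0 4 * _ + _ * κ (N - 2 * s) 4) ≤ _
  gcongr

end Kernels

/-- The rescaled remainder integral
`∬_{B_{ε/μ} × B_{2ε/μ}} W(μ;p,q) |ρ(|p|²)-ρ(|q|²)| / (|q|^{N-2s} |p-q|^{N+2s}) dp dq`
tends to `0` as `μ → 0⁺`, where
`W(μ;p,q) = μ|p-q|(1+|υ+μq|) + ||υ+μp|^{2s-N} - |υ+μq|^{2s-N}|`. -/
theorem statement13 (N : ℕ) (hN : 1 ≤ N) (s : ℝ) (hs : s ∈ Set.Ioo (0 : ℝ) 1)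
    (hNs : 2 * s < N)
    (υ : EuclideanSpace ℝ (Fin N)) (hυ : υ ≠ 0) (ε : ℝ) (hε : 0 < ε)
    (ρ : ℝ → ℝ) (hρ : ContDiff ℝ (⊤ : ℕ∞) ρ) (hρc : HasCompactSupport ρ)
    (hρsupp : tsupport ρ ⊆ Set.Ioo (-2 : ℝ) 2) :
    Tendsto (fun μ : ℝ =>
      ∫⁻ p in (Metric.ball (0 : EuclideanSpace ℝ (Fin N)) (ε / μ)) ×ˢ
          (Metric.ball (0 : EuclideanSpace ℝ (Fin N)) (2 * ε / μ)),
        ENNReal.ofReal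
          ((μ * ‖p.1 - p.2‖ * (1 + ‖υ + μ • p.2‖) +
              |‖υ + μ • p.1‖ ^ (2 * s - (N : ℝ)) - ‖υ + μ • p.2‖ ^ (2 * s - (N : ℝ))|) *
            |ρ (‖p.1‖ ^ 2) - ρ (‖p.2‖ ^ 2)| /
            (‖p.2‖ ^ ((N : ℝ) - 2 * s) * ‖p.1 - p.2‖ ^ ((N : ℝ) + 2 * s))))
      (𝓝[>] (0 : ℝ)) (𝓝 0) := by
  have hυ0 : 0 < ‖υ‖ := norm_pos_iff.2 hυ
  obtain ⟨L, hL0, hL⟩ := exists_cutoff_bound (N := N) hρ hρsupp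
  obtain ⟨I, hI, hIle⟩ := lintegral_dominant_le hN hs υ
  set C₁ : ℝ := (3 * ε) ^ (1 - s) * (1 + ‖υ‖ + 2 * ε) + (1 + N)
  set C₂ : ℝ := L * (2 + (‖υ‖ / 2) ^ (-(N - s))) *
        (2 + 2 ^ (N + s) * (2 ^ (N + s) * (2 + (‖υ‖ / 2) ^ (-(N - s))) +
          (‖υ‖ / 2) ^ (-(N + s))))
  have hC₁ : 0 ≤ C₁ := by positivity
  have hC₂ : 0 ≤ C₂ := by positivity
  have hlim : Tendsto (fun μ : ℝ => ENNReal.ofReal (C₁ * C₂ * μ ^ s) * I) (𝓝[>] (0 : ℝ))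
      (𝓝 0) := by
    have h1 : Tendsto (fun μ : ℝ => C₁ * C₂ * μ ^ s) (𝓝[>] (0 : ℝ)) (𝓝 0) := by
      have : ContinuousAt (fun μ : ℝ => C₁ * C₂ * μ ^ s) 0 :=
        (Real.continuousAt_rpow_const _ _ (Or.inr hs.1.le)).const_mul _
      have h := this.tendsto
      simp only [Real.zero_rpow hs.1.ne', mul_zero] at h
      exact h.mono_left nhdsWithin_le_nhds
    have h2 := ENNReal.Tendsto.mul_const (ENNReal.tendsto_ofReal h1) (Or.inr hI)
    simpa using h2
  refine tendsto_of_tendsto_of_tendsto_of_le_of_le' tendsto_const_nhds hlim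
    (.of_forall fun _ => zero_le) ?_
  have hmem : Set.Ioo (0 : ℝ) (min 1 (‖υ‖ / 8)) ∈ 𝓝[>] (0 : ℝ) :=
    Ioo_mem_nhdsGT (by positivity)
  filter_upwards [hmem] with μ hμ'
  obtain ⟨hμ, hμlt⟩ := hμ'
  have hμ1 : μ ≤ 1 := (hμlt.trans_le (min_le_left _ _)).le
  have hμυ : μ * 4 ≤ ‖υ‖ / 2 := by linarith [hμlt.trans_le (min_le_right _ _)]
  calc _ ≤ ∫⁻ z in (Metric.ball (0 : EuclideanSpace ℝ (Fin N)) (ε / μ)) ×ˢ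
          (Metric.ball (0 : EuclideanSpace ℝ (Fin N)) (2 * ε / μ)),
          ENNReal.ofReal (C₁ * C₂ * μ ^ s) * ENNReal.ofReal (dominant N s μ υ z.1 z.2) := by
        refine setLIntegral_mono' (measurableSet_ball.prod measurableSet_ball) ?_
        rintro ⟨p, q⟩ ⟨hp, hq⟩
        rw [mem_ball_zero_iff, lt_div_iff₀ hμ] at hp hq
        simp only at hp hq ⊢
        rw [← ENNReal.ofReal_mul (by positivity)]
        apply ENNReal.ofReal_le_ofReal
        obtain ⟨hw1, hw2, hw3⟩ := hL p q
        have hdom : 0 ≤ dominant N s μ υ p q :=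
          add_nonneg (mul_nonneg (cutKernel_nonneg _ _ _) (cutKernel_nonneg _ _ _))
            (add_nonneg (mul_nonneg (cutKernel_nonneg _ _ _) (tailKernel_nonneg hμ _ _))
              (mul_nonneg (tailKernel_nonneg hμ _ _) (cutKernel_nonneg _ _ _)))
        by_cases hpq : p = q
        · subst hpq
          simp only [sub_self, abs_zero, mul_zero, zero_div]
          positivity
        have hd : 0 < ‖p - q‖ := norm_pos_iff.2 (sub_ne_zero.2 hpq)
        have hrem := remainder_le hs hNs hμ hε (υ := υ) (p := p) (q := q) (by linarith)
          (by linarith)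
        have hker := kernel_le_dominant hs.1 hNs hμ hυ hμυ hpq (abs_nonneg _) hw1 hw2 hw3
        rw [div_eq_mul_inv, mul_inv, ← Real.rpow_neg (norm_nonneg _),
          ← Real.rpow_neg (norm_nonneg _)]
        set w := |ρ (‖p‖ ^ 2) - ρ (‖q‖ ^ 2)|
        have hw0 : 0 ≤ w := abs_nonneg _
        calc _ ≤ (C₁ * (μ ^ s * ‖p - q‖ ^ s) *
              (singWeight N s μ υ p + singWeight N s μ υ q)) * w *
              (‖q‖ ^ (-((N : ℝ) - 2 * s)) * ‖p - q‖ ^ (-((N : ℝ) + 2 * s))) := by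
              gcongr
          _ = C₁ * μ ^ s * ((singWeight N s μ υ p + singWeight N s μ υ q) * w *
              ‖q‖ ^ (-((N : ℝ) - 2 * s)) * ‖p - q‖ ^ (-((N : ℝ) + s))) := by
              rw [show -((N : ℝ) + s) = s + -(N + 2 * s) by ring, Real.rpow_add hd]
              ring
          _ ≤ C₁ * μ ^ s * (C₂ * dominant N s μ υ p q) := by gcongr
          _ = _ := by ring
    _ ≤ ∫⁻ z : EuclideanSpace ℝ (Fin N) × EuclideanSpace ℝ (Fin N),
          ENNReal.ofReal (C₁ * C₂ * μ ^ s) * ENNReal.ofReal (dominant N s μ υ z.1 z.2) :=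
        setLIntegral_le_lintegral _ _
    _ = ENNReal.ofReal (C₁ * C₂ * μ ^ s) *
          ∫⁻ z : EuclideanSpace ℝ (Fin N) × EuclideanSpace ℝ (Fin N),
            ENNReal.ofReal (dominant N s μ υ z.1 z.2) :=
        lintegral_const_mul' _ _ ENNReal.ofReal_ne_top
    _ ≤ _ := by gcongr; exact hIle μ hμ hμ1
end
end

section
/- Let N ≥ 1 and s ∈ (0,1) with N > 2s, let x ∈ ℝ^N, let ψ : ℝ^N → ℝ be smooth with compact support, and let c ≥ 1. Then there exists C > 0, depending only on N, s, c, x, ψ, such that for every map Φ : ℝ^N → ℝ^N satisfying c⁻¹|u−v| ≤ |Φ(u) − Φ(v)| ≤ c|u−v| for all u, v ∈ ℝ^N, the double integral ∬_{ℝ^N×ℝ^N} ( |Φ(x) − Φ(y)|^{2s−N} − |Φ(x) − Φ(z)|^{2s−N} ) · (ψ(y) − ψ(z)) · |y−z|^{−N−2s} dy dz is absolutely convergent and its absolute value is at most C. -/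
/-!
Write `u(y) = |Φ(x) - Φ(y)|^{2s-N}`. For nonnegative `a, b` and `0 < θ ≤ 1` one has
`|a^{-α} - b^{-α}| ≤ (1 + α) |a - b|^θ (a^{-α-θ} + b^{-α-θ})` (`abs_rpow_neg_sub_rpow_neg_le`).
With `α = N - 2s` and `θ = s`, the bi-Lipschitz bounds turn this into
`|u(y) - u(z)| ≤ C |y - z|^s (|x - y|^{s-N} + |x - z|^{s-N})`, with `C` independent of `Φ`.

The integrand is therefore dominated by the kernel
`|x - z|^{s-N} |ψ(y) - ψ(z)| |y - z|^{-N-s}` plus its reflection in `y, z`, and it suffices to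
dominate that kernel by an integrable function independent of `Φ` (`exists_integrable_majorant`).
Let `ψ` be supported in the ball of radius `R ≥ 1` around `x`.

* If `|z - x| < 2R`, the Lipschitz bound and the boundedness of `ψ` give
  `|ψ(y) - ψ(z)| |y - z|^{-N-s} ≤ g(y - z)` with `g` integrable: near the origin `g` is of order
  `|h|^{1-N-s}`, where `s < 1` is used, and at infinity of order `|h|^{-N-s}`. As `|x - z|^{s-N}`
  is integrable on balls, the product is an integrable convolution integrand.
* If `|z - x| ≥ 2R`, then `ψ(z) = 0` and only `y` in the ball of radius `R` contributes; there
  `|y - z| ≥ |x - z| / 2`, so the kernel is of order `|x - z|^{-2N}`, again integrable.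

The choice `θ = s` makes both singular exponents, `s - N` and `1 - N - s`, exceed `-N`.
-/

open MeasureTheory

noncomputable section

lemma one_sub_rpow_le {t α : ℝ} (ht : 0 < t) (ht1 : t ≤ 1) (hα : 0 < α) :
    1 - t ^ α ≤ (1 + α) * (1 - t) := by
  rcases le_total 1 α with h | h
  · have := one_add_mul_self_le_rpow_one_add (s := t - 1) (by linarith) h
    rw [add_sub_cancel] at this
    nlinarith
  · have := Real.rpow_le_rpow_of_exponent_ge ht ht1 h
    rw [Real.rpow_one] at this
    nlinarith

lemma rpow_neg_sub_rpow_neg_le {a b α θ : ℝ} (ha : 0 < a) (hab : a ≤ b) (hα : 0 < α)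
    (hθ : 0 < θ) (hθ1 : θ ≤ 1) :
    a ^ (-α) - b ^ (-α) ≤ (1 + α) * (b - a) ^ θ * a ^ (-(α + θ)) := by
  have hb : 0 < b := ha.trans_le hab
  have ht : 0 < a / b := div_pos ha hb
  have ht1 : a / b ≤ 1 := (div_le_one hb).2 hab
  have h1 : a ^ (-α) - b ^ (-α) = a ^ (-α) * (1 - (a / b) ^ α) := by
    rw [Real.div_rpow ha.le hb.le, Real.rpow_neg ha.le, Real.rpow_neg hb.le]
    have := (Real.rpow_pos_of_pos ha α).ne'
    have := (Real.rpow_pos_of_pos hb α).ne'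
    field_simp
  have h2 : 1 - a / b ≤ (b - a) ^ θ * a ^ (-θ) := by
    calc 1 - a / b = (1 - a / b) ^ (1 : ℝ) := (Real.rpow_one _).symm
      _ ≤ (1 - a / b) ^ θ :=
        Real.rpow_le_rpow_of_exponent_ge_of_imp (by linarith) (by linarith) hθ1
          (fun _ h => absurd h one_ne_zero)
      _ ≤ ((b - a) / a) ^ θ := by
        apply Real.rpow_le_rpow (by linarith) _ hθ.le
        rw [one_sub_div hb.ne']
        exact div_le_div_of_nonneg_left (by linarith) ha hab
      _ = (b - a) ^ θ * a ^ (-θ) := by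
        rw [Real.div_rpow (by linarith) ha.le, Real.rpow_neg ha.le, div_eq_mul_inv]
  have h3 : a ^ (-(α + θ)) = a ^ (-α) * a ^ (-θ) := by
    rw [← Real.rpow_add ha]; congr 1; ring
  have h4 := one_sub_rpow_le ht ht1 hα
  rw [h1, h3]
  have h5 : 1 - (a / b) ^ α ≤ (1 + α) * ((b - a) ^ θ * a ^ (-θ)) :=
    h4.trans (mul_le_mul_of_nonneg_left h2 (by linarith))
  calc a ^ (-α) * (1 - (a / b) ^ α)
      ≤ a ^ (-α) * ((1 + α) * ((b - a) ^ θ * a ^ (-θ))) :=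
        mul_le_mul_of_nonneg_left h5 (Real.rpow_nonneg ha.le _)
    _ = _ := by ring

/-- A Hölder-type bound for negative powers. It also holds at `a = 0` or `b = 0`, where the
convention `0 ^ (-α) = 0` applies. -/
lemma abs_rpow_neg_sub_rpow_neg_le {a b α θ : ℝ} (ha : 0 ≤ a) (hb : 0 ≤ b) (hα : 0 < α)
    (hθ : 0 < θ) (hθ1 : θ ≤ 1) :
    |a ^ (-α) - b ^ (-α)| ≤
      (1 + α) * |a - b| ^ θ * (a ^ (-(α + θ)) + b ^ (-(α + θ))) := by
  wlog hab : a ≤ b generalizing a b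
  · have := this hb ha (le_of_not_ge hab)
    rwa [abs_sub_comm, abs_sub_comm b a, add_comm (b ^ _)] at this
  have hz : (0 : ℝ) ^ (-α) = 0 := Real.zero_rpow (by linarith)
  have hz' : (0 : ℝ) ^ (-(α + θ)) = 0 := Real.zero_rpow (by linarith)
  rcases ha.eq_or_lt with rfl | ha'
  · rcases hb.eq_or_lt with rfl | hb'
    · rw [hz, hz']; simp
    · rw [hz, hz', zero_sub, zero_sub, abs_neg, abs_neg, zero_add, abs_of_pos hb',
        abs_of_nonneg (Real.rpow_nonneg hb _), mul_assoc, ← Real.rpow_add hb']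
      have : θ + -(α + θ) = -α := by ring
      rw [this]
      have := Real.rpow_nonneg hb (-α)
      nlinarith
  · have hb' := ha'.trans_le hab
    have h1 : b ^ (-α) ≤ a ^ (-α) := Real.rpow_le_rpow_of_nonpos ha' hab (by linarith)
    rw [abs_of_nonneg (by linarith), abs_sub_comm, abs_of_nonneg (by linarith)]
    refine (rpow_neg_sub_rpow_neg_le ha' hab hα hθ hθ1).trans ?_
    apply mul_le_mul_of_nonneg_left
    · linarith [Real.rpow_nonneg hb (-(α + θ))]
    · have := Real.rpow_nonneg (sub_nonneg.2 hab) θ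
      positivity

/-- The upper bound on `a` forces `a = 0` when `d = 0`; both powers then vanish by convention. -/
lemma rpow_neg_le_of_inv_mul_le {c d a γ : ℝ} (hc : 1 ≤ c) (hd : 0 ≤ d) (h : c⁻¹ * d ≤ a)
    (h' : a ≤ c * d) (hγ : 0 < γ) : a ^ (-γ) ≤ c ^ γ * d ^ (-γ) := by
  have hc0 : 0 < c := by linarith
  rcases hd.eq_or_lt with rfl | hd'
  · have ha : a = 0 := le_antisymm (by simpa using h') (by simpa using h)
    simp [ha, Real.zero_rpow (neg_ne_zero.2 hγ.ne')]
  · have h0 : 0 < c⁻¹ * d := by positivity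
    calc a ^ (-γ) ≤ (c⁻¹ * d) ^ (-γ) := Real.rpow_le_rpow_of_nonpos h0 h (by linarith)
      _ = c ^ γ * d ^ (-γ) := by
        rw [Real.mul_rpow (by positivity) hd, Real.inv_rpow hc0.le, Real.rpow_neg hc0.le, inv_inv]

section

variable {N : ℕ}

lemma integrable_one_add_norm_div_four {r : ℝ} (hr : (N : ℝ) < r) :
    Integrable (fun h : EuclideanSpace ℝ (Fin N) => ((1 + ‖h‖) / 4) ^ (-r)) := by
  have := (integrable_one_add_norm (E := EuclideanSpace ℝ (Fin N)) (μ := volume) (r := r)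
    (by simpa using hr)).div_const ((4 : ℝ) ^ (-r))
  refine this.congr (Filter.Eventually.of_forall fun h => ?_)
  simp only
  rw [Real.div_rpow (by positivity) (by norm_num)]

lemma integrable_indicator_ball_rpow (hN : 1 ≤ N) {r β : ℝ} (hβ : β < N) :
    Integrable ((Metric.ball (0 : EuclideanSpace ℝ (Fin N)) r).indicator
      (fun h => ‖h‖ ^ (-β))) := by
  rw [integrable_indicator_iff measurableSet_ball]
  refine integrableOn_ball_of_norm_le_rpow (C := 1) (α := β) (by simpa using hN)
    (by simpa using hβ) (Filter.Eventually.of_forall fun h => ?_) ?_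
  · rw [Real.norm_of_nonneg (by positivity), one_mul]
  · exact (by fun_prop : Measurable fun h : EuclideanSpace ℝ (Fin N) =>
      ‖h‖ ^ (-β)).aestronglyMeasurable

/-- The difference quotients of a bounded Lipschitz function of order `N + s`, `0 < s < 1`,
are dominated by an integrable function of the increment. -/
lemma exists_integrable_majorant_increment (hN : 1 ≤ N) {s : ℝ} (hs : s ∈ Set.Ioo (0 : ℝ) 1)
    {ψ : EuclideanSpace ℝ (Fin N) → ℝ} {L M : ℝ} (hL0 : 0 ≤ L)
    (hL : ∀ y z, |ψ y - ψ z| ≤ L * ‖y - z‖) (hM : ∀ y, |ψ y| ≤ M) :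
    ∃ g : EuclideanSpace ℝ (Fin N) → ℝ, Integrable g ∧ (∀ h, 0 ≤ g h) ∧
      ∀ y z, |ψ y - ψ z| * ‖y - z‖ ^ (-((N : ℝ) + s)) ≤ g (y - z) := by
  obtain ⟨hs0, hs1⟩ := hs
  have hM0 : 0 ≤ M := (abs_nonneg _).trans (hM 0)
  refine ⟨fun h => L * (Metric.ball (0 : EuclideanSpace ℝ (Fin N)) 1).indicator
      (fun h => ‖h‖ ^ (-((N : ℝ) + s - 1))) h
      + (2 * M) * ((1 + ‖h‖) / 4) ^ (-((N : ℝ) + s)), ?_, ?_, ?_⟩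
  · exact ((integrable_indicator_ball_rpow hN (by linarith)).const_mul L).add
      ((integrable_one_add_norm_div_four (by linarith)).const_mul _)
  · intro h
    have : 0 ≤ (Metric.ball (0 : EuclideanSpace ℝ (Fin N)) 1).indicator
      (fun h => ‖h‖ ^ (-((N : ℝ) + s - 1))) h :=
      Set.indicator_nonneg (fun _ _ => by positivity) _
    positivity
  · intro y z
    have h2 : 0 ≤ (2 * M) * ((1 + ‖y - z‖) / 4) ^ (-((N : ℝ) + s)) := by positivity
    by_cases h : ‖y - z‖ < 1
    · simp only
      rw [Set.indicator_of_mem (by simpa using h)]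
      rcases (norm_nonneg (y - z)).eq_or_lt with h0 | h0
      · rw [← h0, Real.zero_rpow (by linarith), mul_zero]
        rw [← h0] at h2
        have : (0 : ℝ) ≤ (0 : ℝ) ^ (-((N : ℝ) + s - 1)) := Real.rpow_nonneg le_rfl _
        positivity
      · have : ‖y - z‖ ^ (-((N : ℝ) + s - 1)) = ‖y - z‖ * ‖y - z‖ ^ (-((N : ℝ) + s)) := by
          nth_rewrite 2 [← Real.rpow_one ‖y - z‖]
          rw [← Real.rpow_add h0]; congr 1; ring
        rw [this, ← mul_assoc]
        have := mul_le_mul_of_nonneg_right (hL y z)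
          (Real.rpow_nonneg (norm_nonneg (y - z)) (-((N : ℝ) + s)))
        linarith
    · simp only
      rw [Set.indicator_of_notMem (by simpa using h), mul_zero, zero_add]
      push Not at h
      have h3 : |ψ y - ψ z| ≤ 2 * M := by
        have := abs_sub (ψ y) (ψ z)
        linarith [hM y, hM z]
      apply mul_le_mul h3 _ (by positivity) (by positivity)
      exact Real.rpow_le_rpow_of_nonpos (by positivity) (by linarith) (by linarith)

lemma exists_integrable_majorant (hN : 1 ≤ N) {s : ℝ} (hs : s ∈ Set.Ioo (0 : ℝ) 1)
    (x : EuclideanSpace ℝ (Fin N)) {ψ : EuclideanSpace ℝ (Fin N) → ℝ}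
    (hψ : ContDiff ℝ (⊤ : ℕ∞) ψ) (hψc : HasCompactSupport ψ) :
    ∃ H : EuclideanSpace ℝ (Fin N) × EuclideanSpace ℝ (Fin N) → ℝ, Integrable H ∧
      ∀ y z, ‖x - z‖ ^ (-((N : ℝ) - s)) *
        (|ψ y - ψ z| * ‖y - z‖ ^ (-((N : ℝ) + s))) ≤ H (y, z) := by
  obtain ⟨L, hL⟩ := ContDiff.lipschitzWith_of_hasCompactSupport hψc hψ (by simp)
  obtain ⟨M, hM⟩ := hψc.exists_bound_of_continuous hψ.continuous
  obtain ⟨g, hg, hg0, hgb⟩ := exists_integrable_majorant_increment (ψ := ψ) (L := L) (M := M) hN hs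
    L.2 (fun y z => by simpa [Real.dist_eq, dist_eq_norm] using hL.dist_le_mul y z) hM
  have hM0 : 0 ≤ M := (norm_nonneg _).trans (hM 0)
  obtain ⟨R, hR1, hR⟩ : ∃ R : ℝ, 1 ≤ R ∧ ∀ y, R ≤ ‖x - y‖ → ψ y = 0 := by
    obtain ⟨R, hR⟩ := hψc.isCompact.isBounded.subset_ball x
    refine ⟨max R 1, le_max_right _ _, fun y hy => ?_⟩
    by_contra h
    have h1 := hR (subset_tsupport ψ h)
    rw [mem_ball_iff_norm'] at h1
    exact absurd (lt_of_lt_of_le h1 (le_max_left R 1)) (not_lt.2 hy)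
  obtain ⟨hs0, hs1⟩ := hs
  have hN' : (1 : ℝ) ≤ N := by exact_mod_cast hN
  set f : EuclideanSpace ℝ (Fin N) → ℝ := fun z =>
    (Metric.ball (0 : EuclideanSpace ℝ (Fin N)) (2 * R)).indicator
      (fun h => ‖h‖ ^ (-((N : ℝ) - s))) (x - z) with hf
  have hfi : Integrable f :=
    (integrable_indicator_ball_rpow hN (by linarith)).comp_sub_left x
  have hf0 : ∀ z, 0 ≤ f z := fun z => Set.indicator_nonneg (fun _ _ => by positivity) _
  set f₂ : EuclideanSpace ℝ (Fin N) → ℝ := fun z =>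
    ((1 + ‖x - z‖) / 4) ^ (-(2 * (N : ℝ))) with hf₂
  have hf₂i : Integrable f₂ :=
    (integrable_one_add_norm_div_four (by linarith)).comp_sub_left x
  set f₃ : EuclideanSpace ℝ (Fin N) → ℝ := (Metric.ball x R).indicator (fun _ => M) with hf₃
  have hf₃i : Integrable f₃ := by
    rw [hf₃, integrable_indicator_iff measurableSet_ball]
    exact integrableOn_const measure_ball_lt_top.ne
  have hf₃0 : ∀ z, 0 ≤ f₃ z := fun z => Set.indicator_nonneg (fun _ _ => hM0) _
  have hf₂0 : ∀ z, 0 ≤ f₂ z := fun z => by positivity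
  refine ⟨fun p => f p.2 * g (p.1 - p.2) + f₃ p.1 * f₂ p.2, ?_, ?_⟩
  · exact (hfi.convolution_integrand (ContinuousLinearMap.mul ℝ ℝ) hg).add (hf₃i.mul_prod hf₂i)
  · intro y z
    simp only
    by_cases hz : ‖x - z‖ < 2 * R
    · have h1 : f z = ‖x - z‖ ^ (-((N : ℝ) - s)) := by
        rw [hf]; exact Set.indicator_of_mem (by simpa using hz) _
      rw [← h1]
      have h2 := mul_le_mul_of_nonneg_left (hgb y z) (hf0 z)
      linarith [mul_nonneg (hf₃0 y) (hf₂0 z)]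
    · push Not at hz
      have hψz : ψ z = 0 := hR z (by linarith)
      have h0 := mul_nonneg (hf0 z) (hg0 (y - z))
      by_cases hy : R ≤ ‖x - y‖
      · rw [hψz, hR y hy]
        simp only [sub_zero, abs_zero, zero_mul, mul_zero]
        linarith [mul_nonneg (hf₃0 y) (hf₂0 z)]
      · push Not at hy
        have h3 : f₃ y = M := Set.indicator_of_mem (by rwa [mem_ball_iff_norm']) _
        have htri : ‖x - z‖ ≤ ‖x - y‖ + ‖y - z‖ := by
          simpa using norm_add_le (x - y) (y - z)
        have hq : 0 < (1 + ‖x - z‖) / 4 := by positivity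
        have h4 : ‖x - z‖ ^ (-((N : ℝ) - s)) ≤ ((1 + ‖x - z‖) / 4) ^ (-((N : ℝ) - s)) :=
          Real.rpow_le_rpow_of_nonpos hq (by linarith) (by linarith)
        have h5 : ‖y - z‖ ^ (-((N : ℝ) + s)) ≤ ((1 + ‖x - z‖) / 4) ^ (-((N : ℝ) + s)) :=
          Real.rpow_le_rpow_of_nonpos hq (by linarith) (by linarith)
        have h6 : f₂ z = ((1 + ‖x - z‖) / 4) ^ (-((N : ℝ) - s)) *
            ((1 + ‖x - z‖) / 4) ^ (-((N : ℝ) + s)) := by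
          rw [← Real.rpow_add hq]; simp only [hf₂]; congr 1; ring
        have h7 : |ψ y - ψ z| ≤ M := by rw [hψz, sub_zero]; exact hM y
        rw [h3]
        calc _ ≤ ((1 + ‖x - z‖) / 4) ^ (-((N : ℝ) - s)) *
            (M * ((1 + ‖x - z‖) / 4) ^ (-((N : ℝ) + s))) := by gcongr
          _ = M * f₂ z := by rw [h6]; ring
          _ ≤ _ := by linarith

end

/-- There is a constant `C`, depending only on `N, s, c, x, ψ`, bounding
the pairing of `|Φ(x)-Φ(·)|^{2s-N}` with `ψ` in the fractional energy, uniformly over all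
`c`-bi-Lipschitz maps `Φ`. -/
theorem statement16 (N : ℕ) (hN : 1 ≤ N) (s : ℝ) (hs : s ∈ Set.Ioo (0 : ℝ) 1)
    (hNs : 2 * s < N) (x : EuclideanSpace ℝ (Fin N))
    (ψ : EuclideanSpace ℝ (Fin N) → ℝ) (hψ : ContDiff ℝ (⊤ : ℕ∞) ψ)
    (hψc : HasCompactSupport ψ) (c : ℝ) (hc : 1 ≤ c) :
    ∃ C > 0, ∀ Φ : EuclideanSpace ℝ (Fin N) → EuclideanSpace ℝ (Fin N),
      (∀ u v, c⁻¹ * ‖u - v‖ ≤ ‖Φ u - Φ v‖) →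
      (∀ u v, ‖Φ u - Φ v‖ ≤ c * ‖u - v‖) →
      Integrable (fun p : EuclideanSpace ℝ (Fin N) × EuclideanSpace ℝ (Fin N) =>
        (‖Φ x - Φ p.1‖ ^ (2 * s - (N : ℝ)) - ‖Φ x - Φ p.2‖ ^ (2 * s - (N : ℝ))) *
          (ψ p.1 - ψ p.2) * ‖p.1 - p.2‖ ^ (-(N : ℝ) - 2 * s)) ∧
      |∫ p : EuclideanSpace ℝ (Fin N) × EuclideanSpace ℝ (Fin N),
        (‖Φ x - Φ p.1‖ ^ (2 * s - (N : ℝ)) - ‖Φ x - Φ p.2‖ ^ (2 * s - (N : ℝ))) *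
          (ψ p.1 - ψ p.2) * ‖p.1 - p.2‖ ^ (-(N : ℝ) - 2 * s)| ≤ C := by
  obtain ⟨H, hHi, hH⟩ := exists_integrable_majorant hN hs x hψ hψc
  obtain ⟨hs0, hs1⟩ := hs
  have hc0 : 0 < c := by linarith
  have hNs' : s < N := by linarith
  set K : ℝ := (1 + ((N : ℝ) - 2 * s)) * c ^ s * c ^ ((N : ℝ) - s) with hK
  have hK0 : 0 ≤ K := by
    have : 0 ≤ 1 + ((N : ℝ) - 2 * s) := by linarith
    positivity
  have hBi : Integrable (fun p : EuclideanSpace ℝ (Fin N) × EuclideanSpace ℝ (Fin N) =>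
      K * (H p + H p.swap)) := (hHi.add hHi.swap).const_mul K
  have hH0 : ∀ p, 0 ≤ H p := fun p => le_trans (by positivity) (hH p.1 p.2)
  refine ⟨(∫ p, K * (H p + H p.swap)) + 1, ?_, fun Φ hl hu => ?_⟩
  · have : 0 ≤ ∫ p, K * (H p + H p.swap) :=
      integral_nonneg fun p => mul_nonneg hK0 (add_nonneg (hH0 _) (hH0 _))
    linarith
  have hΦ : Continuous Φ :=
    (LipschitzWith.of_dist_le_mul (K := ⟨c, hc0.le⟩) fun u v => by
      rw [dist_eq_norm, dist_eq_norm]; exact hu u v).continuous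
  have hΦm := hΦ.measurable
  have hψm := hψ.continuous.measurable
  have hmeas : Measurable (fun p : EuclideanSpace ℝ (Fin N) × EuclideanSpace ℝ (Fin N) =>
        (‖Φ x - Φ p.1‖ ^ (2 * s - (N : ℝ)) - ‖Φ x - Φ p.2‖ ^ (2 * s - (N : ℝ))) *
          (ψ p.1 - ψ p.2) * ‖p.1 - p.2‖ ^ (-(N : ℝ) - 2 * s)) := by
    fun_prop
  have hbound : ∀ p : EuclideanSpace ℝ (Fin N) × EuclideanSpace ℝ (Fin N),
      ‖(‖Φ x - Φ p.1‖ ^ (2 * s - (N : ℝ)) - ‖Φ x - Φ p.2‖ ^ (2 * s - (N : ℝ))) *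
          (ψ p.1 - ψ p.2) * ‖p.1 - p.2‖ ^ (-(N : ℝ) - 2 * s)‖ ≤ K * (H p + H p.swap) := by
    rintro ⟨y, z⟩
    simp only [Prod.swap_prod_mk]
    rcases eq_or_ne y z with rfl | hyz
    · simp only [sub_self, mul_zero, zero_mul, norm_zero]
      exact mul_nonneg hK0 (add_nonneg (hH0 _) (hH0 _))
    have hd : 0 < ‖y - z‖ := norm_pos_iff.2 (sub_ne_zero.2 hyz)
    rw [norm_mul, norm_mul, Real.norm_eq_abs, Real.norm_eq_abs, Real.norm_of_nonneg
      (Real.rpow_nonneg hd.le _)]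
    have hdiff : |‖Φ x - Φ y‖ - ‖Φ x - Φ z‖| ≤ c * ‖y - z‖ := by
      refine (abs_norm_sub_norm_le _ _).trans ?_
      rw [sub_sub_sub_cancel_left, norm_sub_rev y z]
      exact hu z y
    have e1 := abs_rpow_neg_sub_rpow_neg_le (norm_nonneg (Φ x - Φ y)) (norm_nonneg (Φ x - Φ z))
      (sub_pos.2 hNs) hs0 hs1.le
    have hexp : (N : ℝ) - 2 * s + s = N - s := by ring
    rw [neg_sub, hexp] at e1
    have e2 := fun w => rpow_neg_le_of_inv_mul_le hc (norm_nonneg (x - w)) (hl x w) (hu x w)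
      (sub_pos.2 hNs')
    have e3 : |‖Φ x - Φ y‖ - ‖Φ x - Φ z‖| ^ s ≤ c ^ s * ‖y - z‖ ^ s := by
      rw [← Real.mul_rpow hc0.le hd.le]
      exact Real.rpow_le_rpow (abs_nonneg _) hdiff hs0.le
    have e4 : ‖y - z‖ ^ (-((N : ℝ) + s)) = ‖y - z‖ ^ s * ‖y - z‖ ^ (-(N : ℝ) - 2 * s) := by
      rw [← Real.rpow_add hd]; congr 1; ring
    have hpos : 0 ≤ 1 + ((N : ℝ) - 2 * s) := by linarith
    have e5 : |‖Φ x - Φ y‖ ^ (2 * s - (N : ℝ)) - ‖Φ x - Φ z‖ ^ (2 * s - (N : ℝ))| ≤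
        (1 + ((N : ℝ) - 2 * s)) * (c ^ s * ‖y - z‖ ^ s) *
          (c ^ ((N : ℝ) - s) * ‖x - y‖ ^ (-((N : ℝ) - s)) +
            c ^ ((N : ℝ) - s) * ‖x - z‖ ^ (-((N : ℝ) - s))) := by
      refine e1.trans ?_
      gcongr
      · exact e2 y
      · exact e2 z
    have h1 := hH y z
    have h2 := hH z y
    rw [abs_sub_comm, norm_sub_rev z y] at h2
    calc _ ≤ (1 + ((N : ℝ) - 2 * s)) * (c ^ s * ‖y - z‖ ^ s) *
          (c ^ ((N : ℝ) - s) * ‖x - y‖ ^ (-((N : ℝ) - s)) +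
            c ^ ((N : ℝ) - s) * ‖x - z‖ ^ (-((N : ℝ) - s))) *
            |ψ y - ψ z| * ‖y - z‖ ^ (-(N : ℝ) - 2 * s) := by gcongr
      _ = K * (‖x - z‖ ^ (-((N : ℝ) - s)) * (|ψ y - ψ z| * ‖y - z‖ ^ (-((N : ℝ) + s))) +
          ‖x - y‖ ^ (-((N : ℝ) - s)) * (|ψ y - ψ z| * ‖y - z‖ ^ (-((N : ℝ) + s)))) := by
        rw [e4, hK]; ring
      _ ≤ _ := by gcongr
  refine ⟨hBi.mono' hmeas.aestronglyMeasurable (Filter.Eventually.of_forall hbound), ?_⟩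
  have := norm_integral_le_of_norm_le hBi (Filter.Eventually.of_forall hbound)
  rw [Real.norm_eq_abs] at this
  linarith
end
end
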